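/- Let 𝒳, 𝒴, 𝒵 be finite sets, R > 0, and let P_{XYZ}, Q_{XYZ} be pmfs such that Q_{YZ|X} = Q_{Z|X} Q_{Y|Z} (X → Z → Y Markov under Q), P_{XZ} = Q_{XZ}, and D(P_{XY}‖Q_{XY}) < ∞. Then E_{P_{XY},Q_{XY}}(R) ≤ sup over finite 𝒰 and channels P_{U|X} with I_P(U;X|Y) ≤ R and I_P(U;X|Z) ≤ R of I_P(Y;U|Z), plus D(P_{YZ}‖Q_{YZ}). -/

import Mathlib

open scoped BigOperators

noncomputable section

open Classical in
/-- Pushforward of a finitely supported mass function along a map. -/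
def pushf {Ω α : Type*} [Fintype Ω] (p : Ω → ℝ) (f : Ω → α) : α → ℝ :=
  fun a => ∑ ω, if f ω = a then p ω else 0

/-- `p` is a probability mass function. -/
def IsPMF {α : Type*} [Fintype α] (p : α → ℝ) : Prop :=
  (∀ a, 0 ≤ p a) ∧ ∑ a, p a = 1

/-- Kullback–Leibler divergence `D(p‖q)` of mass functions, valued in `EReal`
(equal to `⊤` if `p` is not absolutely continuous w.r.t. `q`). -/
def klDiv {α : Type*} [Fintype α] (p q : α → ℝ) : EReal :=
  if ∀ a, q a = 0 → p a = 0 then ((∑ a, p a * Real.log (p a / q a) : ℝ) : EReal) else ⊤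

/-- Shannon entropy. -/
def entropy {α : Type*} [Fintype α] (p : α → ℝ) : ℝ :=
  -∑ a, p a * Real.log (p a)

/-- Conditional mutual information `I(A;B|C)` under the mass function `p`. -/
def condMI {Ω α β γ : Type*} [Fintype Ω] [Fintype α] [Fintype β] [Fintype γ]
    (p : Ω → ℝ) (A : Ω → α) (B : Ω → β) (C : Ω → γ) : ℝ :=
  entropy (pushf p (fun ω => (A ω, C ω))) + entropy (pushf p (fun ω => (B ω, C ω)))
    - entropy (pushf p (fun ω => (A ω, B ω, C ω))) - entropy (pushf p C)

/-- First marginal of a joint mass function. -/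
def margFst {α β : Type*} [Fintype α] [Fintype β] (p : α × β → ℝ) : α → ℝ :=
  fun a => ∑ b, p (a, b)

/-- Conditional mass function of the second coordinate given the first. -/
def condSnd {α β : Type*} [Fintype α] [Fintype β] (p : α × β → ℝ) : α → β → ℝ :=
  fun a b => p (a, b) / margFst p a

/-- Output distribution of a channel on an input distribution. -/
def outDist {α β : Type*} [Fintype α] [Fintype β] (ch : α → β → ℝ) (pa : α → ℝ) : β → ℝ :=
  fun b => ∑ a, pa a * ch a b

/-- The difference functional
`f(P'_X) = sup_{Q̂_X ≪ Q_X} D(P'_Y‖Q̂_Y) − D(P'_Z‖Q̂_Z)`. -/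
def fdiff {X Y Z : Type*} [Fintype X] [Fintype Y] [Fintype Z]
    (pYgX : X → Y → ℝ) (pZgX : X → Z → ℝ) (qYgX : X → Y → ℝ) (qZgX : X → Z → ℝ)
    (qX : X → ℝ) (pX' : X → ℝ) : EReal :=
  sSup {d : EReal | ∃ qhX : X → ℝ, IsPMF qhX ∧ (∀ x, qX x = 0 → qhX x = 0) ∧
    d = klDiv (outDist pYgX pX') (outDist qYgX qhX)
        - klDiv (outDist pZgX pX') (outDist qZgX qhX)}

/-- The quantity `G_{P_XY, Q_XY, P_XZ, Q_XZ}(R)`: the supremum over finite sets `𝒰`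
(represented by `Fin m`) and channels `P_{U|X}` with `I_P(U;X|Y) ≤ R` and `I_P(U;X|Z) ≤ R`
of `∑_u P_U(u) f(P_{X|U}(·|u))`. -/
def Gexp {X Y Z : Type*} [Fintype X] [Fintype Y] [Fintype Z]
    (pXY : X × Y → ℝ) (qXY : X × Y → ℝ) (pXZ : X × Z → ℝ) (qXZ : X × Z → ℝ)
    (R : ℝ) : EReal :=
  sSup {v : EReal | ∃ (m : ℕ) (ch : X → Fin m → ℝ),
    (∀ x, IsPMF (ch x)) ∧
    condMI (fun w : Fin m × X × Y => ch w.2.1 w.1 * pXY (w.2.1, w.2.2))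
      (fun w => w.1) (fun w => w.2.1) (fun w => w.2.2) ≤ R ∧
    condMI (fun w : Fin m × X × Z => ch w.2.1 w.1 * pXZ (w.2.1, w.2.2))
      (fun w => w.1) (fun w => w.2.1) (fun w => w.2.2) ≤ R ∧
    v = ∑ u : Fin m,
      ((∑ x, ch x u * margFst pXY x : ℝ) : EReal) *
        fdiff (condSnd pXY) (condSnd pXZ) (condSnd qXY) (condSnd qXZ)
          (margFst qXY)
          (fun x => ch x u * margFst pXY x / ∑ x', ch x' u * margFst pXY x')}

/-- The error exponent of distributed hypothesis testing, via the Ahlswede–Csiszár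
multi-letter characterization. -/
def errExp {X W : Type*} [Fintype X] [Fintype W]
    (pXW qXW : X × W → ℝ) (R : ℝ) : EReal :=
  sSup {v : EReal | ∃ n : ℕ, 0 < n ∧
    ∃ κ : (Fin n → X) → Fin (2 ^ ⌊(n : ℝ) * R⌋₊) → ℝ,
      (∀ x, IsPMF (κ x)) ∧
      v = (((n : ℝ)⁻¹ : ℝ) : EReal) *
        klDiv
          (fun mw : Fin (2 ^ ⌊(n : ℝ) * R⌋₊) × (Fin n → W) =>
            ∑ x : Fin n → X, (∏ i, pXW (x i, mw.2 i)) * κ x mw.1)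
          (fun mw : Fin (2 ^ ⌊(n : ℝ) * R⌋₊) × (Fin n → W) =>
            ∑ x : Fin n → X, (∏ i, qXW (x i, mw.2 i)) * κ x mw.1)}

/-!
Single-letterization. For a block of length `n` with message `M`, put
`U = (M, T, Y^{T-1}, Z_{T+1}^n)` with a uniform time-sharing index `T`, and write `Y`, `Z` for the
letters at time `T`. Replacing the block `Z^n` by `Y^n` one letter at a time, the difference of any
functional of `(M, Y^n)` and `(M, Z^n)` telescopes, and the hybrid blocks on either side of step
`T` are `(U, Y)` and `(U, Z)`.

* For divergences, `n⁻¹ (D(M, Y^n) - D(M, Z^n)) = D(U, Y) - D(U, Z)`. Since `U → Z → Y` is a Markov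
  chain under `Q`, the chain rule and data processing give
  `D(U, Y) + D(Z) ≤ D(U, Z) + I_P(Y; U | Z) + D(Y, Z)`, and `D(M, Z^n) = D(Z) = 0` if `P_XZ = Q_XZ`.
* For entropies, with and without conditioning on `M`, it shows that `I_P(U; X | Y)` and
  `I_P(U; X | Z)` are at most `n⁻¹ H(M) ≤ R`, because the hybrid block with its letter at time `T`
  erased is independent of the letters at time `T`.
-/

section Pushforward

variable {Ω α β γ : Type*} [Fintype Ω] {p q : Ω → ℝ}

/-- Absolute continuity `p ≪ q` of mass functions, in the form in which `klDiv` tests it. -/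
def AbsCont {α : Type*} (p q : α → ℝ) : Prop := ∀ a, q a = 0 → p a = 0

open Classical in
theorem pushf_apply (p : Ω → ℝ) (f : Ω → α) (a : α) :
    pushf p f a = ∑ ω, if f ω = a then p ω else 0 := rfl

theorem pushf_nonneg (hp : ∀ ω, 0 ≤ p ω) (f : Ω → α) (a : α) : 0 ≤ pushf p f a := by
  classical
  rw [pushf_apply]
  exact Finset.sum_nonneg fun ω _ => ite_nonneg (hp ω) le_rfl

theorem apply_le_pushf (hp : ∀ ω, 0 ≤ p ω) (f : Ω → α) (ω : Ω) : p ω ≤ pushf p f (f ω) := by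
  classical
  rw [pushf_apply]
  exact (if_pos rfl).ge.trans (Finset.single_le_sum
    (f := fun ω' => if f ω' = f ω then p ω' else 0)
    (fun ω' _ => ite_nonneg (hp ω') le_rfl) (Finset.mem_univ ω))

theorem pushf_le_pushf_comp (hp : ∀ ω, 0 ≤ p ω) (f : Ω → α) (g : α → β) (a : α) :
    pushf p f a ≤ pushf p (fun ω => g (f ω)) (g a) := by
  classical
  simp only [pushf_apply]
  refine Finset.sum_le_sum fun ω _ => ?_
  by_cases hf : f ω = a
  · simp [hf]
  · rw [if_neg hf]
    exact ite_nonneg (hp ω) le_rfl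

theorem pushf_pos (hp : ∀ ω, 0 ≤ p ω) (f : Ω → α) {ω : Ω} (h : p ω ≠ 0) :
    0 < pushf p f (f ω) :=
  ((hp ω).lt_of_ne' h).trans_le (apply_le_pushf hp f ω)

theorem AbsCont.pos_of_ne_zero (hac : AbsCont p q) (hq : ∀ ω, 0 ≤ q ω) (f : Ω → α) {ω : Ω}
    (h : p ω ≠ 0) : 0 < pushf q f (f ω) :=
  pushf_pos hq f (mt (hac ω) h)

protected theorem AbsCont.pushf (hac : AbsCont p q) (hq : ∀ ω, 0 ≤ q ω) (f : Ω → α) :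
    AbsCont (pushf p f) (pushf q f) := by
  classical
  intro a ha
  rw [pushf_apply]
  refine Finset.sum_eq_zero fun ω _ => ?_
  split_ifs with h
  · exact hac ω (le_antisymm ((apply_le_pushf hq f ω).trans (h ▸ ha).le) (hq ω))
  · rfl

theorem sum_pushf_mul [Fintype α] (p : Ω → ℝ) (f : Ω → α) (F : α → ℝ) :
    ∑ a, pushf p f a * F a = ∑ ω, p ω * F (f ω) := by
  classical
  simp only [pushf_apply, Finset.sum_mul]
  rw [Finset.sum_comm]
  simp [ite_mul]

theorem sum_pushf [Fintype α] (p : Ω → ℝ) (f : Ω → α) : ∑ a, pushf p f a = ∑ ω, p ω := by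
  simpa using sum_pushf_mul p f fun _ => 1

protected theorem IsPMF.pushf [Fintype α] (hp : IsPMF p) (f : Ω → α) : IsPMF (pushf p f) :=
  ⟨pushf_nonneg hp.1 f, (sum_pushf p f).trans hp.2⟩

theorem pushf_pushf [Fintype α] (p : Ω → ℝ) (f : Ω → α) (g : α → β) :
    pushf (pushf p f) g = pushf p fun ω => g (f ω) := by
  classical
  funext b
  simpa only [pushf_apply, mul_ite, mul_one, mul_zero] using
    sum_pushf_mul p f fun a => if g a = b then 1 else 0

theorem pushf_id (p : Ω → ℝ) : (pushf p fun ω => ω) = p := by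
  classical
  funext ω
  simp [pushf_apply]

theorem pushf_const_mul (c : ℝ) (p : Ω → ℝ) (f : Ω → α) (a : α) :
    pushf (fun ω => c * p ω) f a = c * pushf p f a := by
  simp only [pushf_apply, Finset.mul_sum, mul_ite, mul_zero]

theorem pushf_congr (p : Ω → ℝ) {f : Ω → α} {g : Ω → β}
    (h : ∀ ω ω', f ω = f ω' ↔ g ω = g ω') (ω : Ω) : pushf p f (f ω) = pushf p g (g ω) := by
  classical
  simp only [pushf_apply, h]

theorem sum_pushf_prodMk_right [Fintype β] (p : Ω → ℝ) (f : Ω → α) (g : Ω → β) (a : α) :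
    ∑ b, pushf p (fun ω => (f ω, g ω)) (a, b) = pushf p f a := by
  classical
  simp only [pushf_apply, Prod.mk.injEq]
  rw [Finset.sum_comm]
  simp [ite_and]

theorem sum_pushf_prodMk_left [Fintype α] (p : Ω → ℝ) (f : Ω → α) (g : Ω → β) (b : β) :
    ∑ a, pushf p (fun ω => (f ω, g ω)) (a, b) = pushf p g b := by
  classical
  simp only [pushf_apply, Prod.mk.injEq]
  rw [Finset.sum_comm]
  simp [ite_and]

theorem pushf_prodMk_fst [Fintype γ] (p : γ × Ω → ℝ) (f : γ × Ω → α) (c : γ) (a : α) :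
    pushf p (fun t => (t.1, f t)) (c, a) = pushf (fun ω => p (c, ω)) (fun ω => f (c, ω)) a := by
  classical
  simp only [pushf_apply, Fintype.sum_prod_type, Prod.mk.injEq]
  rw [Finset.sum_comm]
  simp [ite_and]

/-- The random variables `f` and `g` are independent under `p`. -/
def IndepRV (p : Ω → ℝ) (f : Ω → α) (g : Ω → β) : Prop :=
  ∀ a b, pushf p (fun ω => (f ω, g ω)) (a, b) = pushf p f a * pushf p g b

theorem IndepRV.comp_right [Finite α] [Finite β] {f : Ω → α} {g : Ω → β}
    (h : IndepRV p f g) (k : β → γ) : IndepRV p f fun ω => k (g ω) := by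
  cases nonempty_fintype α
  cases nonempty_fintype β
  intro a c
  rw [← pushf_pushf p (fun ω => (f ω, g ω)) fun t => (t.1, k t.2), pushf_prodMk_fst,
    ← pushf_pushf p g k, ← pushf_const_mul]
  exact congrArg (fun r => pushf r k c) (funext fun b => h a b)

theorem indepRV_of_pushf_eq_mul [Finite α] [Finite β] (hp : ∑ ω, p ω = 1) {f : Ω → α}
    {g : Ω → β} {u : α → ℝ} {v : β → ℝ}
    (h : ∀ a b, pushf p (fun ω => (f ω, g ω)) (a, b) = u a * v b) : IndepRV p f g := by
  cases nonempty_fintype α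
  cases nonempty_fintype β
  have hu : ∀ a, pushf p f a = u a * ∑ b, v b := fun a => by
    simp only [← sum_pushf_prodMk_right p f g, h, Finset.mul_sum]
  have hv : ∀ b, pushf p g b = (∑ a, u a) * v b := fun b => by
    simp only [← sum_pushf_prodMk_left p f g, h, Finset.sum_mul]
  have huv : (∑ a, u a) * ∑ b, v b = 1 := by
    rw [← hp, ← sum_pushf p f, Finset.sum_mul]
    exact Finset.sum_congr rfl fun a _ => (hu a).symm
  intro a b
  rw [h, hu, hv]
  linear_combination (-(u a * v b)) * huv

end Pushforward

section Entropy

variable {Ω α β γ : Type*} [Fintype Ω] {p q : Ω → ℝ}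

/-- Shannon entropy `H(f)` of the random variable `f` under `p`, written as an average over the
sample space so that it depends on `f` only through the partition it induces. -/
def rvEntropy (p : Ω → ℝ) (f : Ω → α) : ℝ := -∑ ω, p ω * Real.log (pushf p f (f ω))

/-- Divergence `D(p_f‖q_f)` between the laws of `f` under `p` and under `q`, as an average over
the sample space. It is the real value of `klDiv`, hence meaningful only when `p_f ≪ q_f`. -/
def rvKLDiv (p q : Ω → ℝ) (f : Ω → α) : ℝ :=
  ∑ ω, p ω * Real.log (pushf p f (f ω) / pushf q f (f ω))

theorem AbsCont.log_pushf_div (hac : AbsCont p q) (hp : ∀ ω, 0 ≤ p ω) (hq : ∀ ω, 0 ≤ q ω)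
    (f : Ω → α) {ω : Ω} (h : p ω ≠ 0) : Real.log (pushf p f (f ω) / pushf q f (f ω))
      = Real.log (pushf p f (f ω)) - Real.log (pushf q f (f ω)) :=
  Real.log_div (pushf_pos hp f h).ne' (hac.pos_of_ne_zero hq f h).ne'

theorem entropy_pushf [Fintype α] (p : Ω → ℝ) (f : Ω → α) :
    entropy (pushf p f) = rvEntropy p f := by
  rw [entropy, rvEntropy, sum_pushf_mul p f fun a => Real.log (pushf p f a)]

theorem rvEntropy_congr (p : Ω → ℝ) {f : Ω → α} {g : Ω → β}
    (h : ∀ ω ω', f ω = f ω' ↔ g ω = g ω') : rvEntropy p f = rvEntropy p g := by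
  simp only [rvEntropy, pushf_congr p h]

theorem rvEntropy_punit_prodMk (p : Ω → ℝ) (f : Ω → α) :
    rvEntropy p (fun ω => (PUnit.unit, f ω)) = rvEntropy p f :=
  rvEntropy_congr p (by simp)

theorem rvEntropy_punit_prodMk_prodMk (p : Ω → ℝ) (f : Ω → α) (g : Ω → β) :
    rvEntropy p (fun ω => ((PUnit.unit, f ω), g ω)) = rvEntropy p fun ω => (f ω, g ω) :=
  rvEntropy_congr p (by simp)

theorem rvKLDiv_congr (p q : Ω → ℝ) {f : Ω → α} {g : Ω → β}
    (h : ∀ ω ω', f ω = f ω' ↔ g ω = g ω') : rvKLDiv p q f = rvKLDiv p q g := by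
  simp only [rvKLDiv, pushf_congr _ h]

theorem rvKLDiv_pushf [Fintype α] (p q : Ω → ℝ) (f : Ω → α) (g : α → β) :
    rvKLDiv (pushf p f) (pushf q f) g = rvKLDiv p q fun ω => g (f ω) := by
  simp only [rvKLDiv, pushf_pushf]
  exact sum_pushf_mul p f fun a =>
    Real.log (pushf p (fun ω => g (f ω)) (g a) / pushf q (fun ω => g (f ω)) (g a))

theorem klDiv_of_absCont (hac : AbsCont p q) :
    klDiv p q = (∑ ω, p ω * Real.log (p ω / q ω) : ℝ) := if_pos hac

theorem klDiv_pushf [Fintype α] (hac : AbsCont p q) (hq : ∀ ω, 0 ≤ q ω) (f : Ω → α) :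
    klDiv (pushf p f) (pushf q f) = (rvKLDiv p q f : EReal) := by
  rw [klDiv_of_absCont (hac.pushf hq f), rvKLDiv,
    sum_pushf_mul p f fun a => Real.log (pushf p f a / pushf q f a)]

theorem klDiv_self (p : Ω → ℝ) : klDiv p p = 0 := by
  rw [klDiv_of_absCont fun _ => id, ← EReal.coe_zero, EReal.coe_eq_coe_iff]
  refine Finset.sum_eq_zero fun ω _ => ?_
  by_cases h : p ω = 0 <;> simp [h]

theorem klDiv_lt_top_iff : klDiv p q < ⊤ ↔ AbsCont p q := by
  by_cases h : AbsCont p q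
  · simp [klDiv_of_absCont h, h]
  · simp [show klDiv p q = ⊤ from if_neg h, h]

theorem mul_div_le_of_nonneg {a b : ℝ} (hb : 0 ≤ b) : a * (b / a) ≤ b := by
  by_cases ha : a = 0
  · simpa [ha]
  · exact (mul_div_cancel₀ b ha).le

theorem sum_mul_log_div_pushf_nonpos [Fintype α] (hp : ∀ ω, 0 ≤ p ω) {f : Ω → α} {s : α → ℝ}
    (hs : ∀ a, 0 ≤ s a) (hac : ∀ ω, p ω ≠ 0 → 0 < s (f ω)) (hsum : ∑ a, s a ≤ ∑ ω, p ω) :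
    ∑ ω, p ω * Real.log (s (f ω) / pushf p f (f ω)) ≤ 0 := by
  have hlog : ∀ ω, p ω * Real.log (s (f ω) / pushf p f (f ω))
      ≤ p ω * (s (f ω) / pushf p f (f ω)) - p ω := by
    intro ω
    by_cases h : p ω = 0
    · simp [h]
    · rw [← mul_sub_one]
      exact mul_le_mul_of_nonneg_left
        (Real.log_le_sub_one_of_pos (div_pos (hac ω h) (pushf_pos hp f h))) (hp ω)
  have hmass : ∑ ω, p ω * (s (f ω) / pushf p f (f ω)) ≤ ∑ a, s a := by
    rw [← sum_pushf_mul p f fun a => s a / pushf p f a]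
    exact Finset.sum_le_sum fun a _ => mul_div_le_of_nonneg (hs a)
  calc ∑ ω, p ω * Real.log (s (f ω) / pushf p f (f ω))
      ≤ ∑ ω, (p ω * (s (f ω) / pushf p f (f ω)) - p ω) := Finset.sum_le_sum fun ω _ => hlog ω
    _ ≤ 0 := by rw [Finset.sum_sub_distrib]; linarith

theorem sum_mul_congr_of_ne_zero {F G : Ω → ℝ} (h : ∀ ω, p ω ≠ 0 → F ω = G ω) :
    ∑ ω, p ω * F ω = ∑ ω, p ω * G ω :=
  Finset.sum_congr rfl fun ω _ => by
    by_cases hω : p ω = 0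
    · simp [hω]
    · rw [h ω hω]

theorem rvKLDiv_comp_le [Finite α] [Finite β] (hp : ∀ ω, 0 ≤ p ω) (hq : ∀ ω, 0 ≤ q ω)
    (hac : AbsCont p q) (f : Ω → α) (g : α → β) :
    rvKLDiv p q (fun ω => g (f ω)) ≤ rvKLDiv p q f := by
  cases nonempty_fintype α
  cases nonempty_fintype β
  set gf : Ω → β := fun ω => g (f ω)
  have hsum : ∑ a, pushf q f a * (pushf p gf (g a) / pushf q gf (g a)) ≤ ∑ ω, p ω := by
    rw [sum_pushf_mul q f fun a => pushf p gf (g a) / pushf q gf (g a),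
      ← sum_pushf_mul q gf fun b => pushf p gf b / pushf q gf b, ← sum_pushf p gf]
    exact Finset.sum_le_sum fun b _ => mul_div_le_of_nonneg (pushf_nonneg hp gf b)
  have hpos : ∀ ω, p ω ≠ 0 →
      0 < pushf q f (f ω) * (pushf p gf (gf ω) / pushf q gf (gf ω)) := fun ω h =>
    mul_pos (hac.pos_of_ne_zero hq f h)
      (div_pos (pushf_pos hp gf h) (hac.pos_of_ne_zero hq gf h))
  have hgibbs := sum_mul_log_div_pushf_nonpos hp
    (s := fun a => pushf q f a * (pushf p gf (g a) / pushf q gf (g a)))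
    (fun a => mul_nonneg (pushf_nonneg hq f a)
      (div_nonneg (pushf_nonneg hp gf _) (pushf_nonneg hq gf _))) hpos hsum
  rw [← sub_nonpos]
  refine le_of_eq_of_le ?_ hgibbs
  rw [rvKLDiv, rvKLDiv, ← Finset.sum_sub_distrib]
  simp only [← mul_sub]
  refine sum_mul_congr_of_ne_zero fun ω h => ?_
  have hf := (hac.pos_of_ne_zero hq f h).ne'
  have hratio := (div_pos (pushf_pos hp gf h) (hac.pos_of_ne_zero hq gf h)).ne'
  rw [Real.log_div (mul_ne_zero hf hratio) (pushf_pos hp f h).ne', Real.log_mul hf hratio,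
    hac.log_pushf_div hp hq f h]
  ring

theorem rvEntropy_comp_le (hp : ∀ ω, 0 ≤ p ω) (f : Ω → α) (g : α → β) :
    rvEntropy p (fun ω => g (f ω)) ≤ rvEntropy p f := by
  refine neg_le_neg (Finset.sum_le_sum fun ω _ => ?_)
  by_cases h : p ω = 0
  · simp [h]
  · exact mul_le_mul_of_nonneg_left
      (Real.log_le_log (pushf_pos hp f h) (pushf_le_pushf_comp hp f g (f ω))) (hp ω)

theorem rvEntropy_prodMk_le_log_card_add [Fintype α] [Nonempty α] [Finite β] (hp : IsPMF p)
    (f : Ω → α) (g : Ω → β) :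
    rvEntropy p (fun ω => (f ω, g ω)) ≤ Real.log (Fintype.card α) + rvEntropy p g := by
  cases nonempty_fintype β
  have hcard : (0 : ℝ) < Fintype.card α := Nat.cast_pos.mpr Fintype.card_pos
  have hgibbs := sum_mul_log_div_pushf_nonpos hp.1 (f := fun ω => (f ω, g ω))
    (s := fun t => (Fintype.card α : ℝ)⁻¹ * pushf p g t.2)
    (fun t => mul_nonneg (inv_pos.mpr hcard).le (pushf_nonneg hp.1 g _))
    (fun ω h => mul_pos (inv_pos.mpr hcard) (pushf_pos hp.1 g h))
    (by simp [Fintype.sum_prod_type, ← Finset.mul_sum, sum_pushf, hcard.ne'])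
  rw [← sub_nonpos]
  refine le_of_eq_of_le ?_ hgibbs
  rw [← mul_one (Real.log _), ← hp.2, Finset.mul_sum, rvEntropy, rvEntropy, sub_eq_iff_eq_add]
  simp only [← Finset.sum_neg_distrib, ← Finset.sum_add_distrib, mul_comm (Real.log _),
    ← mul_neg, ← mul_add]
  refine sum_mul_congr_of_ne_zero fun ω h => ?_
  have hg := (pushf_pos hp.1 g h).ne'
  rw [Real.log_div (mul_ne_zero (inv_pos.mpr hcard).ne' hg)
    (pushf_pos hp.1 (fun ω => (f ω, g ω)) h).ne', Real.log_mul (inv_pos.mpr hcard).ne' hg,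
    Real.log_inv]
  ring

theorem rvEntropy_sub_sub_le_log_card [Fintype α] [Nonempty α] [Finite γ] (hp : IsPMF p)
    (M : Ω → α) (W : Ω → β) (c : β → γ) :
    rvEntropy p W - rvEntropy p (fun ω => c (W ω))
        - (rvEntropy p (fun ω => (M ω, W ω)) - rvEntropy p (fun ω => (M ω, c (W ω))))
      ≤ Real.log (Fintype.card α) := by
  have hW := rvEntropy_comp_le hp.1 (fun ω => (M ω, W ω)) Prod.snd
  have hM := rvEntropy_prodMk_le_log_card_add hp M fun ω => c (W ω)
  linarith

theorem IndepRV.rvEntropy_prodMk {f : Ω → α} {g : Ω → β} (hp : ∀ ω, 0 ≤ p ω)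
    (h : IndepRV p f g) :
    rvEntropy p (fun ω => (f ω, g ω)) = rvEntropy p f + rvEntropy p g := by
  simp only [rvEntropy, ← neg_add, ← Finset.sum_add_distrib, ← mul_add]
  refine congrArg Neg.neg (sum_mul_congr_of_ne_zero fun ω hω => ?_)
  rw [h, Real.log_mul (pushf_pos hp f hω).ne' (pushf_pos hp g hω).ne']

end Entropy

section CondMI

variable {Ω α β γ δ : Type*} [Fintype Ω] [Fintype α] [Fintype β] [Fintype γ] {p : Ω → ℝ}

theorem condMI_eq_rvEntropy (p : Ω → ℝ) (A : Ω → α) (B : Ω → β) (C : Ω → γ) :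
    condMI p A B C = rvEntropy p (fun ω => (A ω, C ω)) + rvEntropy p (fun ω => (B ω, C ω))
      - rvEntropy p (fun ω => (A ω, B ω, C ω)) - rvEntropy p C := by
  simp only [condMI, entropy_pushf]

theorem condMI_pushf [Fintype δ] (p : Ω → ℝ) (f : Ω → δ) (A : δ → α) (B : δ → β) (C : δ → γ) :
    condMI (pushf p f) A B C
      = condMI p (fun ω => A (f ω)) (fun ω => B (f ω)) fun ω => C (f ω) := by
  simp only [condMI, pushf_pushf]

theorem condMI_comm (p : Ω → ℝ) (A : Ω → α) (B : Ω → β) (C : Ω → γ) :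
    condMI p A B C = condMI p B A C := by
  rw [condMI_eq_rvEntropy, condMI_eq_rvEntropy, rvEntropy_congr p
    (f := fun ω => (A ω, B ω, C ω)) (g := fun ω => (B ω, A ω, C ω)) (by grind)]
  ring

theorem condMI_eq_sum (p : Ω → ℝ) (A : Ω → α) (B : Ω → β) (C : Ω → γ) :
    condMI p A B C = ∑ ω, p ω * (Real.log (pushf p (fun ω => (A ω, B ω, C ω)) (A ω, B ω, C ω))
      + Real.log (pushf p C (C ω)) - Real.log (pushf p (fun ω => (A ω, C ω)) (A ω, C ω))
      - Real.log (pushf p (fun ω => (B ω, C ω)) (B ω, C ω))) := by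
  simp only [condMI_eq_rvEntropy, rvEntropy, mul_sub, mul_add, Finset.sum_sub_distrib,
    Finset.sum_add_distrib]
  ring

theorem condMI_nonneg (hp : ∀ ω, 0 ≤ p ω) (A : Ω → α) (B : Ω → β) (C : Ω → γ) :
    0 ≤ condMI p A B C := by
  set AC : Ω → α × γ := fun ω => (A ω, C ω)
  set BC : Ω → β × γ := fun ω => (B ω, C ω) with hBC
  set s : α × β × γ → ℝ := fun t => pushf p AC (t.1, t.2.2) * (pushf p BC t.2 / pushf p C t.2.2)
    with hs
  have hmass : ∑ t, s t ≤ ∑ ω, p ω := by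
    rw [Fintype.sum_prod_type, ← sum_pushf p AC, Fintype.sum_prod_type]
    refine Finset.sum_le_sum fun a _ => ?_
    rw [Fintype.sum_prod_type, Finset.sum_comm]
    refine Finset.sum_le_sum fun c _ => ?_
    simp only [hs, ← Finset.mul_sum, ← Finset.sum_div, hBC, sum_pushf_prodMk_left]
    exact mul_le_of_le_one_right (pushf_nonneg hp AC _) (div_self_le_one _)
  have hgibbs := sum_mul_log_div_pushf_nonpos hp (f := fun ω => (A ω, B ω, C ω)) (s := s)
    (fun t => mul_nonneg (pushf_nonneg hp AC _)
      (div_nonneg (pushf_nonneg hp BC _) (pushf_nonneg hp C _)))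
    (fun ω h => mul_pos (pushf_pos hp AC h) (div_pos (pushf_pos hp BC h) (pushf_pos hp C h)))
    hmass
  rw [← neg_nonpos]
  refine le_of_eq_of_le ?_ hgibbs
  rw [condMI_eq_sum, ← Finset.sum_neg_distrib]
  simp only [← mul_neg]
  refine sum_mul_congr_of_ne_zero fun ω h => ?_
  have hac := (pushf_pos hp AC h).ne'
  have hbc := (pushf_pos hp BC h).ne'
  have hc := (pushf_pos hp C h).ne'
  rw [Real.log_div (mul_ne_zero hac (div_ne_zero hbc hc)) (pushf_pos hp _ h).ne',
    Real.log_mul hac (div_ne_zero hbc hc), Real.log_div hbc hc]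
  ring

theorem condMI_comp_le [Fintype δ] (hp : ∀ ω, 0 ≤ p ω) (f : α → δ) (A : Ω → α) (B : Ω → β)
    (C : Ω → γ) : condMI p (fun ω => f (A ω)) B C ≤ condMI p A B C := by
  have hchain := condMI_nonneg hp A B fun ω => (C ω, f (A ω))
  rw [condMI_eq_rvEntropy,
    rvEntropy_congr p (f := fun ω => (A ω, C ω, f (A ω))) (g := fun ω => (A ω, C ω)) (by grind),
    rvEntropy_congr p (f := fun ω => (A ω, B ω, C ω, f (A ω))) (g := fun ω => (A ω, B ω, C ω))
      (by grind),
    rvEntropy_congr p (f := fun ω => (B ω, C ω, f (A ω))) (g := fun ω => (f (A ω), B ω, C ω))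
      (by grind),
    rvEntropy_congr p (f := fun ω => (C ω, f (A ω))) (g := fun ω => (f (A ω), C ω))
      (by grind)] at hchain
  rw [condMI_eq_rvEntropy, condMI_eq_rvEntropy]
  linarith

theorem condMI_le_of_indepRV {κ σ τ : Type*} [Finite κ] [Finite σ] [Finite τ]
    (hp : ∀ ω, 0 ≤ p ω) (M : Ω → κ) {S : Ω → σ} {W : Ω → τ} (hSW : IndepRV p S W)
    (g : κ × σ → α) (x : τ → β) (c : τ → γ) :
    condMI p (fun ω => g (M ω, S ω)) (fun ω => x (W ω)) (fun ω => c (W ω))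
      ≤ rvEntropy p (fun ω => (S ω, W ω)) - rvEntropy p (fun ω => (S ω, c (W ω)))
        - (rvEntropy p (fun ω => ((M ω, S ω), W ω))
          - rvEntropy p (fun ω => ((M ω, S ω), c (W ω)))) := by
  cases nonempty_fintype κ
  cases nonempty_fintype σ
  cases nonempty_fintype τ
  calc condMI p (fun ω => g (M ω, S ω)) (fun ω => x (W ω)) (fun ω => c (W ω))
      ≤ condMI p (fun ω => (M ω, S ω)) (fun ω => x (W ω)) (fun ω => c (W ω)) :=
        condMI_comp_le hp g _ _ _
    _ ≤ condMI p (fun ω => (M ω, S ω)) W (fun ω => c (W ω)) := by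
        rw [condMI_comm, condMI_comm p _ W]
        exact condMI_comp_le hp x _ _ _
    _ = _ := by
        rw [condMI_eq_rvEntropy, hSW.rvEntropy_prodMk hp,
          (hSW.comp_right c).rvEntropy_prodMk hp,
          rvEntropy_congr p (f := fun ω => (W ω, c (W ω))) (g := W) (by grind),
          rvEntropy_congr p (f := fun ω => ((M ω, S ω), W ω, c (W ω)))
            (g := fun ω => ((M ω, S ω), W ω)) (by grind)]
        ring

end CondMI

section MarkovChain

variable {Ω α β γ δ X V μ : Type*} [Fintype Ω] {p q : Ω → ℝ}

/-- `U → Z → Y` is a Markov chain under `q`: `q(u, y, z) q(z) = q(u, z) q(y, z)`. -/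
def IsMarkovChain (q : Ω → ℝ) (U : Ω → α) (Z : Ω → γ) (Y : Ω → β) : Prop :=
  ∀ u y z, pushf q (fun ω => (U ω, Y ω, Z ω)) (u, y, z) * pushf q Z z
    = pushf q (fun ω => (U ω, Z ω)) (u, z) * pushf q (fun ω => (Y ω, Z ω)) (y, z)

theorem isMarkovChain_pushf_iff [Fintype δ] {f : Ω → δ} {U : δ → α} {Z : δ → γ} {Y : δ → β} :
    IsMarkovChain (pushf q f) U Z Y
      ↔ IsMarkovChain q (fun ω => U (f ω)) (fun ω => Z (f ω)) fun ω => Y (f ω) := by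
  simp only [IsMarkovChain, pushf_pushf]

theorem IsMarkovChain.absCont {U : Ω → α} {Z : Ω → γ} {Y : Ω → β}
    (h : IsMarkovChain q U Z Y) (hp : ∀ ω, 0 ≤ p ω)
    (hUZ : AbsCont (pushf p fun ω => (U ω, Z ω)) (pushf q fun ω => (U ω, Z ω)))
    (hYZ : AbsCont (pushf p fun ω => (Y ω, Z ω)) (pushf q fun ω => (Y ω, Z ω))) :
    AbsCont (pushf p fun ω => (U ω, Y ω, Z ω)) (pushf q fun ω => (U ω, Y ω, Z ω)) := by
  rintro ⟨u, y, z⟩ hzero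
  have hprod := h u y z
  rw [hzero, zero_mul, eq_comm, mul_eq_zero] at hprod
  refine le_antisymm ?_ (pushf_nonneg hp _ _)
  rcases hprod with hq | hq
  · exact (pushf_le_pushf_comp hp _ (fun t => (t.1, t.2.2)) (u, y, z)).trans_eq (hUZ _ hq)
  · exact (pushf_le_pushf_comp hp _ Prod.snd (u, y, z)).trans_eq (hYZ _ hq)

/-- The law of `(U, X, V)` when `(X, V)` has law `P` and `U` is produced from `X` by the
channel `c`. -/
def channelLaw (c : X → μ → ℝ) (P : X × V → ℝ) : μ × X × V → ℝ :=
  fun w => c w.2.1 w.1 * P w.2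

variable [Fintype X] [Fintype V] [Fintype μ] {c : X → μ → ℝ}

theorem pushf_channelLaw_snd (hc : ∀ x, IsPMF (c x)) (P : X × V → ℝ) (g : X × V → α) :
    pushf (channelLaw c P) (fun w => g w.2) = pushf P g := by
  classical
  funext a
  simp only [pushf_apply, channelLaw]
  rw [Fintype.sum_prod_type, Finset.sum_comm]
  simp only [← ite_zero_mul, Finset.sum_ite_irrel, ← Finset.sum_mul, (hc _).2]
  simp

theorem pushf_channelLaw (c : X → μ → ℝ) (P : X × V → ℝ) (g : X × V → α) (u : μ) (a : α) :
    pushf (channelLaw c P) (fun w => (w.1, g w.2)) (u, a)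
      = ∑ x, c x u * pushf P (fun v => (v.1, g v)) (x, a) := by
  simp only [pushf_prodMk_fst, channelLaw, ← pushf_const_mul]
  classical
  simp only [pushf_apply, Fintype.sum_prod_type]

protected theorem IsMarkovChain.channelLaw (hc : ∀ x, IsPMF (c x)) {Q : X × V → ℝ} {Z : X × V → γ}
    {Y : X × V → β} (h : IsMarkovChain Q Prod.fst Z Y) :
    IsMarkovChain (channelLaw c Q) Prod.fst (fun w => Z w.2) fun w => Y w.2 := by
  intro u y z
  rw [pushf_channelLaw c Q (fun v => (Y v, Z v)), pushf_channelLaw c Q Z,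
    pushf_channelLaw_snd hc Q Z, pushf_channelLaw_snd hc Q fun v => (Y v, Z v), Finset.sum_mul,
    Finset.sum_mul]
  exact Finset.sum_congr rfl fun x _ => by rw [mul_assoc, mul_assoc, h x y z]

theorem IsMarkovChain.rvKLDiv_add_eq [Fintype α] [Fintype β] [Fintype γ] {U : Ω → α}
    {Z : Ω → γ} {Y : Ω → β} (h : IsMarkovChain q U Z Y) (hp : ∀ ω, 0 ≤ p ω)
    (hq : ∀ ω, 0 ≤ q ω) (hac : AbsCont p q) :
    rvKLDiv p q (fun ω => (U ω, Y ω, Z ω)) + rvKLDiv p q Z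
      = rvKLDiv p q (fun ω => (U ω, Z ω)) + condMI p U Y Z
        + rvKLDiv p q (fun ω => (Y ω, Z ω)) := by
  simp only [rvKLDiv, condMI_eq_sum, ← Finset.sum_add_distrib, ← mul_add]
  refine sum_mul_congr_of_ne_zero fun ω hω => ?_
  have hUYZ := (hac.pos_of_ne_zero hq (fun ω => (U ω, Y ω, Z ω)) hω).ne'
  have hUZ := (hac.pos_of_ne_zero hq (fun ω => (U ω, Z ω)) hω).ne'
  have hYZ := (hac.pos_of_ne_zero hq (fun ω => (Y ω, Z ω)) hω).ne'
  have hZ := (hac.pos_of_ne_zero hq Z hω).ne'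
  have hlog := congrArg Real.log (h (U ω) (Y ω) (Z ω))
  rw [Real.log_mul hUYZ hZ, Real.log_mul hUZ hYZ] at hlog
  rw [hac.log_pushf_div hp hq (fun ω => (U ω, Y ω, Z ω)) hω, hac.log_pushf_div hp hq Z hω,
    hac.log_pushf_div hp hq (fun ω => (U ω, Z ω)) hω,
    hac.log_pushf_div hp hq (fun ω => (Y ω, Z ω)) hω]
  linarith

theorem IsMarkovChain.rvKLDiv_add_le [Fintype α] [Fintype β] [Fintype γ] {U : Ω → α} {Z : Ω → γ}
    {Y : Ω → β} (h : IsMarkovChain q U Z Y) (hp : ∀ ω, 0 ≤ p ω) (hq : ∀ ω, 0 ≤ q ω)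
    (hac : AbsCont p q) :
    rvKLDiv p q (fun ω => (U ω, Y ω)) + rvKLDiv p q Z
      ≤ rvKLDiv p q (fun ω => (U ω, Z ω)) + condMI p Y U Z
        + rvKLDiv p q (fun ω => (Y ω, Z ω)) := by
  rw [condMI_comm]
  exact (add_le_add_left (rvKLDiv_comp_le hp hq hac (fun ω => (U ω, Y ω, Z ω))
    fun t => (t.1, t.2.1)) _).trans_eq (h.rvKLDiv_add_eq hp hq hac)

end MarkovChain

section TimeSharing

variable {Ω ι α : Type*} [Fintype ι] {p q : Ω → ℝ}

/-- The law of `(T, ω)` with `T` uniform on `ι` and independent of `ω ∼ p`. -/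
def timeShare (ι : Type*) [Fintype ι] (p : Ω → ℝ) : ι × Ω → ℝ :=
  fun t => (Fintype.card ι : ℝ)⁻¹ * p t.2

theorem timeShare_nonneg (hp : ∀ ω, 0 ≤ p ω) (t : ι × Ω) : 0 ≤ timeShare ι p t :=
  mul_nonneg (inv_nonneg.mpr (Nat.cast_nonneg _)) (hp t.2)

protected theorem AbsCont.timeShare (hac : AbsCont p q) [Nonempty ι] :
    AbsCont (timeShare ι p) (timeShare ι q) := fun t ht => by
  have hq : q t.2 = 0 := by simpa [timeShare] using ht
  simp [timeShare, hac _ hq]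

variable [Fintype Ω]

protected theorem IsPMF.timeShare [Nonempty ι] (hp : IsPMF p) : IsPMF (timeShare ι p) :=
  ⟨timeShare_nonneg hp.1, by simp [timeShare, Fintype.sum_prod_type, ← Finset.mul_sum, hp.2]⟩

theorem pushf_timeShare (p : Ω → ℝ) (g : ι × Ω → α) (i : ι) (a : α) :
    pushf (timeShare ι p) (fun t => (t.1, g t)) (i, a)
      = (Fintype.card ι : ℝ)⁻¹ * pushf p (fun ω => g (i, ω)) a := by
  rw [pushf_prodMk_fst, ← pushf_const_mul]
  rfl

theorem rvEntropy_timeShare [Nonempty ι] (hp : IsPMF p) (g : ι × Ω → α) :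
    rvEntropy (timeShare ι p) (fun t => (t.1, g t)) = Real.log (Fintype.card ι)
      + (Fintype.card ι : ℝ)⁻¹ * ∑ i, rvEntropy p fun ω => g (i, ω) := by
  have hcard : (Fintype.card ι : ℝ) ≠ 0 := Nat.cast_ne_zero.mpr Fintype.card_ne_zero
  have hterm : ∀ i, ∑ ω, p ω * Real.log ((Fintype.card ι : ℝ)⁻¹
      * pushf p (fun ω => g (i, ω)) (g (i, ω)))
      = -Real.log (Fintype.card ι) - rvEntropy p fun ω => g (i, ω) := by
    intro i
    rw [sum_mul_congr_of_ne_zero fun ω hω => by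
      rw [Real.log_mul (inv_ne_zero hcard) (pushf_pos hp.1 (fun ω => g (i, ω)) hω).ne',
        Real.log_inv]]
    simp only [mul_add, Finset.sum_add_distrib, ← Finset.sum_mul, hp.2, one_mul, rvEntropy,
      sub_neg_eq_add]
  rw [rvEntropy, Fintype.sum_prod_type]
  simp only [pushf_timeShare, timeShare, mul_assoc, ← Finset.mul_sum, hterm,
    Finset.sum_sub_distrib, Finset.sum_const, Finset.card_univ, nsmul_eq_mul]
  field_simp
  ring

theorem rvKLDiv_timeShare [Nonempty ι] (p q : Ω → ℝ) (g : ι × Ω → α) :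
    rvKLDiv (timeShare ι p) (timeShare ι q) (fun t => (t.1, g t))
      = (Fintype.card ι : ℝ)⁻¹ * ∑ i, rvKLDiv p q fun ω => g (i, ω) := by
  have hcard : (Fintype.card ι : ℝ)⁻¹ ≠ 0 :=
    inv_ne_zero (Nat.cast_ne_zero.mpr Fintype.card_ne_zero)
  rw [rvKLDiv, Fintype.sum_prod_type]
  simp only [pushf_timeShare, mul_div_mul_left _ _ hcard, timeShare, mul_assoc, ← Finset.mul_sum,
    rvKLDiv]

end TimeSharing

section Block

variable {ι W X V K α : Type*} [Fintype ι]

/-- The law of a message `m` together with a block `w` of i.i.d. letters `(x, v) ∼ P`, where `m` is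
produced by the encoder `κ` from the `x`-parts of the block. -/
def blockLaw (P : X × V → ℝ) (κ : (ι → X) → K → ℝ) : K × (ι → X × V) → ℝ :=
  fun t => (∏ j, P (t.2 j)) * κ (fun j => (t.2 j).1) t.1

protected theorem AbsCont.blockLaw {P Q : X × V → ℝ} (hac : AbsCont P Q)
    (κ : (ι → X) → K → ℝ) : AbsCont (blockLaw P κ) (blockLaw Q κ) := by
  intro t ht
  rcases mul_eq_zero.mp ht with hprod | hmsg
  · obtain ⟨j, -, hj⟩ := Finset.prod_eq_zero_iff.mp hprod
    rw [blockLaw, Finset.prod_eq_zero (Finset.mem_univ j) (hac _ hj), zero_mul]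
  · rw [blockLaw, hmsg, mul_zero]

variable [DecidableEq ι]

theorem prod_update_mul (P : W → ℝ) (w : ι → W) (i : ι) (b : W) :
    (∏ j, P (Function.update w i b j)) * P (w i) = (∏ j, P (w j)) * P b := by
  simp only [← Function.comp_apply (f := P), Function.comp_update]
  rw [Finset.prod_update_of_mem (Finset.mem_univ i),
    Finset.prod_eq_mul_prod_sdiff_singleton_of_mem (Finset.mem_univ i) (P ∘ w),
    Function.comp_apply]
  ring

/-- The joint law of the message and of the block observed by the decoder, as it appears in
`errExp`. -/
def messageLaw [Fintype X] (p : X × W → ℝ) (κ : (ι → X) → K → ℝ) : K × (ι → W) → ℝ :=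
  fun mw => ∑ x : ι → X, (∏ i, p (x i, mw.2 i)) * κ x mw.1

protected theorem AbsCont.messageLaw [Fintype X] {p q : X × W → ℝ} (hac : AbsCont p q)
    (hq : ∀ w, 0 ≤ q w) {κ : (ι → X) → K → ℝ} (hκ : ∀ x m, 0 ≤ κ x m) :
    AbsCont (messageLaw p κ) (messageLaw q κ) := by
  intro mw hmw
  refine Finset.sum_eq_zero fun x _ => hac.blockLaw κ (mw.1, fun i => (x i, mw.2 i)) ?_
  exact (Finset.sum_eq_zero_iff_of_nonneg fun x _ =>
    mul_nonneg (Finset.prod_nonneg fun i _ => hq _) (hκ _ _)).mp hmw x (Finset.mem_univ x)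

theorem prod_pushf [Fintype W] (P : W → ℝ) (f : W → α) (a : ι → α) :
    ∏ i, pushf P f (a i) = pushf (fun w : ι → W => ∏ i, P (w i)) (fun w i => f (w i)) a := by
  classical
  simp only [pushf_apply, Fintype.prod_sum, Finset.prod_ite_zero, Finset.mem_univ, true_imp_iff,
    funext_iff]

theorem messageLaw_pushf [Fintype X] [Fintype V] [Fintype K] (P : X × V → ℝ) (g : X × V → W)
    (κ : (ι → X) → K → ℝ) : messageLaw (pushf P fun w => (w.1, g w)) κ
      = pushf (blockLaw P κ) fun t => (t.1, fun i => g (t.2 i)) := by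
  classical
  funext ⟨m, v⟩
  have hblock : ∀ x : ι → X, ∏ i, pushf P (fun w => (w.1, g w)) (x i, v i)
      = pushf (fun w : ι → X × V => ∏ i, P (w i))
        (fun w => (fun i => (w i).1, fun i => g (w i))) (x, v) := fun x => by
    rw [prod_pushf P _ fun i => (x i, v i)]
    simp only [pushf_apply, funext_iff, Prod.mk.injEq, forall_and]
  rw [pushf_prodMk_fst]
  simp only [messageLaw, hblock]
  simp only [blockLaw, pushf_apply, Prod.mk.injEq, Finset.sum_mul]
  rw [Finset.sum_comm]
  simp only [ite_and, ite_mul, zero_mul, Finset.sum_ite_eq, Finset.mem_univ, if_true]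
  congr!

theorem sum_prod_eq_one [Fintype W] {P : W → ℝ} (hP : ∑ a, P a = 1) :
    ∑ w : ι → W, ∏ j, P (w j) = 1 := by
  rw [← Fintype.prod_sum fun _ a => P a]
  simp [hP]

/-- Exchanging `b` with the `i`-th letter of `w` is an involution preserving the product
weight. -/
theorem sum_prod_mul_eq_sum_update [Fintype W] {P : W → ℝ} (hP : ∑ a, P a = 1) (i : ι)
    (F : (ι → W) → ℝ) :
    ∑ w : ι → W, (∏ j, P (w j)) * F w
      = ∑ b, P b * ∑ w : ι → W, (∏ j, P (w j)) * F (Function.update w i b) := by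
  have hswap : Function.Involutive
      fun s : W × (ι → W) => (s.2 i, Function.update s.2 i s.1) := fun s => by simp
  calc ∑ w : ι → W, (∏ j, P (w j)) * F w
      = ∑ s : W × (ι → W), P s.1 * ((∏ j, P (s.2 j)) * F s.2) := by
        simp only [Fintype.sum_prod_type, ← Finset.mul_sum, ← Finset.sum_mul, hP, one_mul]
    _ = ∑ s : W × (ι → W), P (s.2 i)
          * ((∏ j, P (Function.update s.2 i s.1 j)) * F (Function.update s.2 i s.1)) :=
        (Equiv.sum_comp (hswap.toPerm _) _).symm
    _ = ∑ s : W × (ι → W), P s.1 * ((∏ j, P (s.2 j)) * F (Function.update s.2 i s.1)) :=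
        Finset.sum_congr rfl fun s _ => by
          linear_combination F (Function.update s.2 i s.1) * prod_update_mul P s.2 i s.1
    _ = _ := by simp only [Fintype.sum_prod_type, Finset.mul_sum]

/-- The test channel `x ↦ P(u | x)` induced by a random variable `U` on the time-shared block:
a time `T` and a block are drawn, the `x`-part of the letter at time `T` is overwritten by `x`
before encoding, and `U` is evaluated. -/
def testChannel [Fintype X] [Fintype V] [Fintype K] (P : X × V → ℝ) (κ : (ι → X) → K → ℝ)
    (U : ι × K × (ι → X × V) → α) (x : X) : α → ℝ :=
  pushf (fun t => (Fintype.card ι : ℝ)⁻¹ * ((∏ j, P (t.2.2 j))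
    * κ (Function.update (fun j => (t.2.2 j).1) t.1 x) t.2.1)) U

variable [Fintype X] [Fintype V] [Fintype K] {P : X × V → ℝ} {κ : (ι → X) → K → ℝ}

protected theorem IsPMF.blockLaw (hP : IsPMF P) (hκ : ∀ x, IsPMF (κ x)) :
    IsPMF (blockLaw P κ) := by
  refine ⟨fun t => mul_nonneg (Finset.prod_nonneg fun j _ => hP.1 _) ((hκ _).1 _), ?_⟩
  simp only [Fintype.sum_prod_type_right, blockLaw, ← Finset.mul_sum, (hκ _).2, mul_one,
    sum_prod_eq_one hP.2]

theorem isPMF_testChannel [Nonempty ι] [Fintype α] (hP : IsPMF P) (hκ : ∀ x, IsPMF (κ x))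
    (U : ι × K × (ι → X × V) → α) (x : X) : IsPMF (testChannel P κ U x) := by
  refine IsPMF.pushf ⟨fun t => mul_nonneg (inv_nonneg.mpr (Nat.cast_nonneg _))
    (mul_nonneg (Finset.prod_nonneg fun j _ => hP.1 _) ((hκ _).1 _)), ?_⟩ U
  rw [Fintype.sum_prod_type]
  simp only [Fintype.sum_prod_type_right (α₁ := K), ← Finset.mul_sum, (hκ _).2, mul_one,
    sum_prod_eq_one hP.2]
  simp

theorem pushf_timeShare_blockLaw (hP : ∑ a, P a = 1) (κ : (ι → X) → K → ℝ)
    {U : ι × K × (ι → X × V) → α}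
    (hU : ∀ i m w b, U (i, m, Function.update w i b) = U (i, m, w)) :
    pushf (timeShare ι (blockLaw P κ)) (fun t => (U t, t.2.2 t.1))
      = channelLaw (testChannel P κ U) P := by
  classical
  funext ⟨u, b⟩
  have hletter : ∀ i m, ∑ w : ι → X × V, (∏ j, P (w j)) *
      (if U (i, m, w) = u ∧ w i = b then κ (fun j => (w j).1) m else 0)
      = P b * ∑ w : ι → X × V, (∏ j, P (w j)) *
        (if U (i, m, w) = u then κ (Function.update (fun j => (w j).1) i b.1) m else 0) := by
    intro i m
    rw [sum_prod_mul_eq_sum_update hP i]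
    have hfst : ∀ w b', (fun j => (Function.update w i b' j : X × V).1)
        = Function.update (fun j => (w j).1) i b'.1 :=
      fun w b' => Function.comp_update Prod.fst w i b'
    simp only [hU, Function.update_self, and_comm, ite_and, hfst, mul_ite_zero,
      Finset.sum_ite_irrel, Finset.sum_const_zero]
    simp
  simp only [channelLaw, testChannel, pushf_apply, Fintype.sum_prod_type, timeShare,
    blockLaw, Prod.mk.injEq, ← mul_ite_zero, ← Finset.mul_sum, hletter]
  ring

theorem pushf_timeShare_blockLaw_letter [Nonempty ι] (hP : IsPMF P) (hκ : ∀ x, IsPMF (κ x)) :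
    pushf (timeShare ι (blockLaw P κ)) (fun t => t.2.2 t.1) = P := by
  calc pushf (timeShare ι (blockLaw P κ)) (fun t => t.2.2 t.1)
      = pushf (channelLaw (testChannel P κ fun _ => ()) P) Prod.snd := by
        rw [← pushf_timeShare_blockLaw hP.2 κ fun _ _ _ _ => rfl, pushf_pushf]
    _ = P := (pushf_channelLaw_snd (isPMF_testChannel hP hκ _) P fun w => w).trans (pushf_id P)

end Block

section Independence

variable {ι X V K α σ : Type*} [Fintype ι] [DecidableEq ι] [Fintype X] [Fintype V] [Fintype K]
  {P : X × V → ℝ} {κ : (ι → X) → K → ℝ}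

theorem testChannel_comp_block (P : X × V → ℝ) (hκ : ∀ x, IsPMF (κ x))
    (S : ι × (ι → X × V) → σ) (x : X) :
    testChannel P κ (fun t => S (t.1, t.2.2)) x
      = pushf (timeShare ι fun w : ι → X × V => ∏ j, P (w j)) S := by
  classical
  funext s
  simp only [testChannel, timeShare, pushf_apply, Fintype.sum_prod_type]
  refine Finset.sum_congr rfl fun i _ => ?_
  rw [Finset.sum_comm]
  simp only [Finset.sum_ite_irrel, ← Finset.mul_sum, (hκ _).2, mul_one, Finset.sum_const_zero]

theorem indepRV_timeShare_blockLaw [Nonempty ι] [Finite σ] (hP : IsPMF P)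
    (hκ : ∀ x, IsPMF (κ x)) {S : ι × (ι → X × V) → σ}
    (hS : ∀ i w b, S (i, Function.update w i b) = S (i, w)) :
    IndepRV (timeShare ι (blockLaw P κ)) (fun t => S (t.1, t.2.2)) fun t => t.2.2 t.1 := by
  refine indepRV_of_pushf_eq_mul (hP.blockLaw hκ).timeShare.2
    (u := pushf (timeShare ι fun w : ι → X × V => ∏ j, P (w j)) S) (v := P) fun s b => ?_
  rw [pushf_timeShare_blockLaw hP.2 κ fun i _ w b => hS i w b, channelLaw,
    testChannel_comp_block P hκ]

end Independence

section Hybrid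

variable {n : ℕ} {W A B C A' B' K μ : Type*}

/-- The block that reads the letters of `w` before time `k` through `a` and the others through
`b`. -/
def hybrid (a : W → A) (b : W → B) (k : ℕ) (w : Fin n → W) : Fin n → A ⊕ B :=
  fun j => if (j : ℕ) < k then .inl (a (w j)) else .inr (b (w j))

/-- The hybrid block around time `i`, with the letter at time `i` erased: it stands for the pair
`(A^{i-1}, B_{i+1}^n)`. -/
def hybridOff (a : W → A) (b : W → B) (i : Fin n) (w : Fin n → W) : Fin n → Option (A ⊕ B) :=
  fun j => if j = i then none else some (hybrid a b i w j)

theorem hybrid_zero_eq_iff (a : W → A) (b : W → B) {w w' : Fin n → W} :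
    hybrid a b 0 w = hybrid a b 0 w' ↔ (fun j => b (w j)) = fun j => b (w' j) := by
  simp [hybrid, funext_iff]

theorem hybrid_last_eq_iff (a : W → A) (b : W → B) {w w' : Fin n → W} :
    hybrid a b n w = hybrid a b n w' ↔ (fun j => a (w j)) = fun j => a (w' j) := by
  simp [hybrid, funext_iff]

theorem hybrid_eq_iff (a : W → A) (b : W → B) (i : Fin n) {w w' : Fin n → W} :
    hybrid a b i w = hybrid a b i w'
      ↔ hybridOff a b i w = hybridOff a b i w' ∧ b (w i) = b (w' i) := by
  simp only [funext_iff, hybridOff, hybrid]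
  grind

theorem hybrid_succ_eq_iff (a : W → A) (b : W → B) (i : Fin n) {w w' : Fin n → W} :
    hybrid a b (i + 1) w = hybrid a b (i + 1) w'
      ↔ hybridOff a b i w = hybridOff a b i w' ∧ a (w i) = a (w' i) := by
  simp only [funext_iff, hybridOff, hybrid]
  grind

theorem hybridOff_update (a : W → A) (b : W → B) (i : Fin n) (w : Fin n → W) (c : W) :
    hybridOff a b i (Function.update w i c) = hybridOff a b i w := by
  funext j
  by_cases h : j = i <;> simp [hybridOff, hybrid, h]

theorem hybridOff_comp (a : W → A) (b : W → B) (f : A → A') (g : B → B') (i : Fin n)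
    (w : Fin n → W) : hybridOff (fun c => f (a c)) (fun c => g (b c)) i w
      = fun j => (hybridOff a b i w j).map (Sum.map f g) := by
  funext j
  by_cases h : j = i
  · simp [hybridOff, h]
  · by_cases hlt : (j : ℕ) < i <;> simp [hybridOff, hybrid, h, hlt]

/-- The auxiliary random variable `U = (M, T, Y^{T-1}, Z_{T+1}^n)` of the single-letterization,
where `T` is the time, `M` the message, and the block `w` is read through `y` and `z`. -/
def auxVar (y : W → B) (z : W → C) (t : Fin n × K × (Fin n → W)) :
    K × Fin n × (Fin n → Option (B ⊕ C)) :=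
  (t.2.1, t.1, hybridOff y z t.1 t.2.2)

theorem comp_auxVar_update (f : K × Fin n × (Fin n → Option (B ⊕ C)) → μ) (y : W → B)
    (z : W → C) (i : Fin n) (m : K) (w : Fin n → W) (b : W) :
    f (auxVar y z (i, m, Function.update w i b)) = f (auxVar y z (i, m, w)) := by
  simp only [auxVar, hybridOff_update]

end Hybrid

section Telescoping

variable {n : ℕ} {Ω L W A B : Type*} [Fintype Ω] [NeZero n] {p : Ω → ℝ}

/-- Csiszár's sum identity: consecutive hybrid blocks differ in one letter only. -/
theorem rvEntropy_timeShare_hybridOff_sub (hp : IsPMF p) (M : Ω → L) (w : Ω → Fin n → W)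
    (a : W → A) (b : W → B) :
    rvEntropy (timeShare (Fin n) p)
        (fun t => ((M t.2, t.1, hybridOff a b t.1 (w t.2)), a (w t.2 t.1)))
      - rvEntropy (timeShare (Fin n) p)
        (fun t => ((M t.2, t.1, hybridOff a b t.1 (w t.2)), b (w t.2 t.1)))
      = (n : ℝ)⁻¹ * (rvEntropy p (fun ω => (M ω, fun j => a (w ω j)))
        - rvEntropy p fun ω => (M ω, fun j => b (w ω j))) := by
  rw [rvEntropy_congr _ (f := fun t => (_, a _))
      (g := fun t => (t.1, M t.2, hybrid a b (t.1 + 1) (w t.2)))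
      (by simp only [Prod.mk.injEq]; grind [hybrid_succ_eq_iff]),
    rvEntropy_congr _ (f := fun t => (_, b _)) (g := fun t => (t.1, M t.2, hybrid a b t.1 (w t.2)))
      (by simp only [Prod.mk.injEq]; grind [hybrid_eq_iff]),
    rvEntropy_timeShare hp, rvEntropy_timeShare hp, add_sub_add_left_eq_sub, ← mul_sub,
    ← Finset.sum_sub_distrib, Fintype.card_fin,
    rvEntropy_congr _ (f := fun ω => (M ω, fun j => a (w ω j)))
      (g := fun ω => (M ω, hybrid a b n (w ω))) (by simp [hybrid_last_eq_iff]),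
    rvEntropy_congr _ (f := fun ω => (M ω, fun j => b (w ω j)))
      (g := fun ω => (M ω, hybrid a b 0 (w ω))) (by simp [hybrid_zero_eq_iff]),
    ← Finset.sum_range_sub fun k => rvEntropy p fun ω => (M ω, hybrid a b k (w ω)),
    ← Fin.sum_univ_eq_sum_range fun k => rvEntropy p (fun ω => (M ω, hybrid a b (k + 1) (w ω)))
      - rvEntropy p fun ω => (M ω, hybrid a b k (w ω))]

theorem rvKLDiv_timeShare_hybridOff_sub (p q : Ω → ℝ) (M : Ω → L) (w : Ω → Fin n → W)
    (a : W → A) (b : W → B) :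
    rvKLDiv (timeShare (Fin n) p) (timeShare (Fin n) q)
        (fun t => ((M t.2, t.1, hybridOff a b t.1 (w t.2)), a (w t.2 t.1)))
      - rvKLDiv (timeShare (Fin n) p) (timeShare (Fin n) q)
        (fun t => ((M t.2, t.1, hybridOff a b t.1 (w t.2)), b (w t.2 t.1)))
      = (n : ℝ)⁻¹ * (rvKLDiv p q (fun ω => (M ω, fun j => a (w ω j)))
        - rvKLDiv p q fun ω => (M ω, fun j => b (w ω j))) := by
  rw [rvKLDiv_congr _ _ (f := fun t => (_, a _))
      (g := fun t => (t.1, M t.2, hybrid a b (t.1 + 1) (w t.2)))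
      (by simp only [Prod.mk.injEq]; grind [hybrid_succ_eq_iff]),
    rvKLDiv_congr _ _ (f := fun t => (_, b _)) (g := fun t => (t.1, M t.2, hybrid a b t.1 (w t.2)))
      (by simp only [Prod.mk.injEq]; grind [hybrid_eq_iff]),
    rvKLDiv_timeShare, rvKLDiv_timeShare, ← mul_sub,
    ← Finset.sum_sub_distrib, Fintype.card_fin,
    rvKLDiv_congr _ _ (f := fun ω => (M ω, fun j => a (w ω j)))
      (g := fun ω => (M ω, hybrid a b n (w ω))) (by simp [hybrid_last_eq_iff]),
    rvKLDiv_congr _ _ (f := fun ω => (M ω, fun j => b (w ω j)))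
      (g := fun ω => (M ω, hybrid a b 0 (w ω))) (by simp [hybrid_zero_eq_iff]),
    ← Finset.sum_range_sub fun k => rvKLDiv p q fun ω => (M ω, hybrid a b k (w ω)),
    ← Fin.sum_univ_eq_sum_range fun k => rvKLDiv p q (fun ω => (M ω, hybrid a b (k + 1) (w ω)))
      - rvKLDiv p q fun ω => (M ω, hybrid a b k (w ω))]

end Telescoping

section SingleLetter

universe u

variable {n : ℕ} [NeZero n] {X V B C β γ σ μ : Type*} {K : Type u} [Fintype X] [Fintype V]
  [Fintype K] {P : X × V → ℝ} {κ : (Fin n → X) → K → ℝ}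

theorem condMI_timeShare_blockLaw_le_of_telescope [Nonempty K] [Finite σ] [Fintype β] [Fintype γ]
    [Fintype μ] (hP : IsPMF P) (hκ : ∀ x, IsPMF (κ x)) {S : Fin n × (Fin n → X × V) → σ}
    (hS : ∀ i w b, S (i, Function.update w i b) = S (i, w)) (c : X × V → γ)
    (htele : ∀ {L : Type u} (M : K × (Fin n → X × V) → L),
      rvEntropy (timeShare (Fin n) (blockLaw P κ))
          (fun t => ((M t.2, S (t.1, t.2.2)), t.2.2 t.1))
        - rvEntropy (timeShare (Fin n) (blockLaw P κ))
          (fun t => ((M t.2, S (t.1, t.2.2)), c (t.2.2 t.1)))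
        = (n : ℝ)⁻¹ * (rvEntropy (blockLaw P κ) (fun s => (M s, s.2))
          - rvEntropy (blockLaw P κ) (fun s => (M s, fun j => c (s.2 j)))))
    (g : K × σ → μ) (x : X × V → β) :
    condMI (timeShare (Fin n) (blockLaw P κ)) (fun t => g (t.2.1, S (t.1, t.2.2)))
      (fun t => x (t.2.2 t.1)) (fun t => c (t.2.2 t.1))
      ≤ (n : ℝ)⁻¹ * Real.log (Fintype.card K) := by
  have hblock : IsPMF (blockLaw P κ) := hP.blockLaw hκ
  have hmessage := htele Prod.fst
  have htrivial := htele fun _ => PUnit.unit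
  simp only [rvEntropy_punit_prodMk, rvEntropy_punit_prodMk_prodMk] at htrivial
  refine (condMI_le_of_indepRV hblock.timeShare.1 (fun t => t.2.1)
    (indepRV_timeShare_blockLaw hP hκ hS) g x c).trans ?_
  rw [hmessage, htrivial, ← mul_sub]
  exact mul_le_mul_of_nonneg_left
    (rvEntropy_sub_sub_le_log_card hblock Prod.fst Prod.snd fun w j => c (w j))
    (inv_nonneg.mpr n.cast_nonneg)

/-- `U` is a function of `(M, T)` and of the hybrid of `y` with the whole letters, which is
independent of the letter at time `T`. -/
theorem condMI_auxVar_left_le [Nonempty K] [Fintype B] [Fintype β] [Fintype μ]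
    (hP : IsPMF P) (hκ : ∀ x, IsPMF (κ x)) (y : X × V → B) (z : X × V → C) (x : X × V → β)
    (e : K × Fin n × (Fin n → Option (B ⊕ C)) → μ) :
    condMI (timeShare (Fin n) (blockLaw P κ)) (fun t => e (auxVar y z t))
      (fun t => x (t.2.2 t.1)) (fun t => y (t.2.2 t.1))
      ≤ (n : ℝ)⁻¹ * Real.log (Fintype.card K) := by
  have hU : ∀ t : Fin n × K × (Fin n → X × V), auxVar y z t
      = (t.2.1, t.1, fun j => (hybridOff y id t.1 t.2.2 j).map (Sum.map id z)) := fun t => by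
    rw [← hybridOff_comp]
    rfl
  simp only [hU]
  refine condMI_timeShare_blockLaw_le_of_telescope hP hκ
    (S := fun s => (s.1, hybridOff y id s.1 s.2)) (fun i w b => by simp only [hybridOff_update]) y
    (fun M => ?_) (fun s => e (s.1, s.2.1, fun j => (s.2.2 j).map (Sum.map id z))) x
  have htele := rvEntropy_timeShare_hybridOff_sub (hP.blockLaw hκ) M Prod.snd y id
  simp only [id] at htele ⊢
  linarith

theorem condMI_auxVar_right_le [Nonempty K] [Fintype C] [Fintype β] [Fintype μ]
    (hP : IsPMF P) (hκ : ∀ x, IsPMF (κ x)) (y : X × V → B) (z : X × V → C) (x : X × V → β)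
    (e : K × Fin n × (Fin n → Option (B ⊕ C)) → μ) :
    condMI (timeShare (Fin n) (blockLaw P κ)) (fun t => e (auxVar y z t))
      (fun t => x (t.2.2 t.1)) (fun t => z (t.2.2 t.1))
      ≤ (n : ℝ)⁻¹ * Real.log (Fintype.card K) := by
  have hU : ∀ t : Fin n × K × (Fin n → X × V), auxVar y z t
      = (t.2.1, t.1, fun j => (hybridOff id z t.1 t.2.2 j).map (Sum.map y id)) := fun t => by
    rw [← hybridOff_comp]
    rfl
  simp only [hU]
  exact condMI_timeShare_blockLaw_le_of_telescope hP hκ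
    (S := fun s => (s.1, hybridOff id z s.1 s.2)) (fun i w b => by simp only [hybridOff_update]) z
    (fun M => rvEntropy_timeShare_hybridOff_sub (hP.blockLaw hκ) M Prod.snd id z)
    (fun s => e (s.1, s.2.1, fun j => (s.2.2 j).map (Sum.map y id))) x

theorem rvKLDiv_timeShare_letter {Q : X × V → ℝ} (hP : IsPMF P) (hQ : IsPMF Q)
    (hκ : ∀ x, IsPMF (κ x)) (f : X × V → γ) :
    rvKLDiv (timeShare (Fin n) (blockLaw P κ)) (timeShare (Fin n) (blockLaw Q κ))
      (fun t => f (t.2.2 t.1)) = rvKLDiv P Q f := by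
  rw [← rvKLDiv_pushf _ _ (fun t : Fin n × K × (Fin n → X × V) => t.2.2 t.1) f,
    pushf_timeShare_blockLaw_letter hP hκ,
    pushf_timeShare_blockLaw_letter hQ hκ]

theorem rvKLDiv_auxVar_sub (P Q : X × V → ℝ) (κ : (Fin n → X) → K → ℝ) (y : X × V → B)
    (z : X × V → C) {e : K × Fin n × (Fin n → Option (B ⊕ C)) → μ} (he : e.Injective) :
    rvKLDiv (timeShare (Fin n) (blockLaw P κ)) (timeShare (Fin n) (blockLaw Q κ))
        (fun t => (e (auxVar y z t), y (t.2.2 t.1)))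
      - rvKLDiv (timeShare (Fin n) (blockLaw P κ)) (timeShare (Fin n) (blockLaw Q κ))
        (fun t => (e (auxVar y z t), z (t.2.2 t.1)))
      = (n : ℝ)⁻¹
        * (rvKLDiv (blockLaw P κ) (blockLaw Q κ) (fun s => (s.1, fun j => y (s.2 j)))
          - rvKLDiv (blockLaw P κ) (blockLaw Q κ) fun s => (s.1, fun j => z (s.2 j))) := by
  rw [← rvKLDiv_timeShare_hybridOff_sub (blockLaw P κ) (blockLaw Q κ) Prod.fst Prod.snd y z]
  congr 1 <;> exact rvKLDiv_congr _ _ fun t t' => by simp only [Prod.mk.injEq, he.eq_iff, auxVar]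

theorem isMarkovChain_auxVar [Finite μ] {Q : X × V → ℝ} (hQ : IsPMF Q) (hκ : ∀ x, IsPMF (κ x))
    {y : X × V → B} {z : X × V → C} (h : IsMarkovChain Q Prod.fst z y)
    (e : K × Fin n × (Fin n → Option (B ⊕ C)) → μ) :
    IsMarkovChain (timeShare (Fin n) (blockLaw Q κ)) (fun t => e (auxVar y z t))
      (fun t => z (t.2.2 t.1)) fun t => y (t.2.2 t.1) := by
  cases nonempty_fintype μ
  have hchannel := h.channelLaw (isPMF_testChannel hQ hκ fun t => e (auxVar y z t))
  rwa [← pushf_timeShare_blockLaw hQ.2 κ (comp_auxVar_update e y z), isMarkovChain_pushf_iff]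
    at hchannel

theorem rvKLDiv_auxVar_add_le [Fintype B] [Fintype C] [Fintype μ] {Q : X × V → ℝ}
    (hP : IsPMF P) (hQ : IsPMF Q) (hac : AbsCont P Q) (hκ : ∀ x, IsPMF (κ x))
    {y : X × V → B} {z : X × V → C} (h : IsMarkovChain Q Prod.fst z y)
    {e : K × Fin n × (Fin n → Option (B ⊕ C)) → μ} (he : e.Injective) :
    (n : ℝ)⁻¹ * rvKLDiv (blockLaw P κ) (blockLaw Q κ) (fun s => (s.1, fun j => y (s.2 j)))
        + rvKLDiv P Q z
      ≤ condMI (timeShare (Fin n) (blockLaw P κ)) (fun t => y (t.2.2 t.1))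
          (fun t => e (auxVar y z t)) (fun t => z (t.2.2 t.1))
        + rvKLDiv P Q (fun w => (y w, z w))
        + (n : ℝ)⁻¹
          * rvKLDiv (blockLaw P κ) (blockLaw Q κ) (fun s => (s.1, fun j => z (s.2 j))) := by
  have hsingle := (isMarkovChain_auxVar hQ hκ h e).rvKLDiv_add_le (hP.blockLaw hκ).timeShare.1
    (hQ.blockLaw hκ).timeShare.1 (hac.blockLaw κ).timeShare
  rw [rvKLDiv_timeShare_letter hP hQ hκ,
    rvKLDiv_timeShare_letter hP hQ hκ fun w => (y w, z w)] at hsingle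
  linarith [rvKLDiv_auxVar_sub P Q κ y z he]

end SingleLetter

section ErrorExponent

variable {X Y Z W V : Type*} [Fintype X]

theorem inv_mul_log_two_pow_floor_le {R : ℝ} (hR : 0 ≤ R) (n : ℕ) :
    (n : ℝ)⁻¹ * Real.log (2 ^ ⌊n * R⌋₊) ≤ R := by
  have hlog : Real.log (2 ^ ⌊n * R⌋₊) ≤ n * R := by
    rw [Real.log_pow]
    calc (⌊n * R⌋₊ : ℝ) * Real.log 2 ≤ ⌊n * R⌋₊ :=
          mul_le_of_le_one_right (Nat.cast_nonneg _) (by linarith [Real.log_two_lt_d9])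
      _ ≤ n * R := Nat.floor_le (by positivity)
  rw [inv_mul_eq_div]
  exact div_le_of_le_mul₀ n.cast_nonneg hR (hlog.trans_eq (mul_comm _ _))

theorem le_errExp [Fintype W] (p q : X × W → ℝ) {R : ℝ} {n : ℕ} (hn : 0 < n)
    {κ : (Fin n → X) → Fin (2 ^ ⌊n * R⌋₊) → ℝ} (hκ : ∀ x, IsPMF (κ x)) :
    ((n : ℝ)⁻¹ : ℝ) * klDiv (messageLaw p κ) (messageLaw q κ) ≤ errExp p q R :=
  le_sSup ⟨n, hn, κ, hκ, rfl⟩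

theorem errExp_le [Fintype W] {p q : X × W → ℝ} {R : ℝ} {c : EReal}
    (h : ∀ n : ℕ, 0 < n → ∀ κ : (Fin n → X) → Fin (2 ^ ⌊n * R⌋₊) → ℝ, (∀ x, IsPMF (κ x)) →
      ((n : ℝ)⁻¹ : ℝ) * klDiv (messageLaw p κ) (messageLaw q κ) ≤ c) : errExp p q R ≤ c := by
  refine sSup_le ?_
  rintro v ⟨n, hn, κ, hκ, rfl⟩
  exact h n hn κ hκ

theorem errExp_self_nonpos [Fintype W] (p : X × W → ℝ) (R : ℝ) : errExp p p R ≤ 0 :=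
  errExp_le fun n _ κ _ => by rw [klDiv_self, mul_zero]

/-- The single-letter part of the bound: the supremum of `I_P(Y;U|Z)` over the finite `𝒰` and the
channels `P_{U|X}` with `I_P(U;X|Y) ≤ R` and `I_P(U;X|Z) ≤ R`. -/
def supCondMI [Fintype Y] [Fintype Z] (P : X × Y × Z → ℝ) (R : ℝ) : EReal :=
  sSup {v : EReal | ∃ (m : ℕ) (ch : X → Fin m → ℝ), (∀ x, IsPMF (ch x)) ∧
    condMI (channelLaw ch P) (fun w => w.1) (fun w => w.2.1) (fun w => w.2.2.1) ≤ R ∧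
    condMI (channelLaw ch P) (fun w => w.1) (fun w => w.2.1) (fun w => w.2.2.2) ≤ R ∧
    v = (condMI (channelLaw ch P) (fun w => w.2.2.1) (fun w => w.1) (fun w => w.2.2.2) : ℝ)}

variable [Fintype Y] [Fintype Z] {P Q : X × Y × Z → ℝ} {R : ℝ} {n : ℕ}

theorem klDiv_messageLaw_pushf {K : Type*} [Fintype K] [Fintype V] [Fintype W] {P Q : X × V → ℝ}
    (hQ : IsPMF Q) (hac : AbsCont P Q) {κ : (Fin n → X) → K → ℝ} (hκ : ∀ x, IsPMF (κ x))
    (g : X × V → W) :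
    klDiv (messageLaw (pushf P fun w => (w.1, g w)) κ)
        (messageLaw (pushf Q fun w => (w.1, g w)) κ)
      = (rvKLDiv (blockLaw P κ) (blockLaw Q κ) fun t => (t.1, fun i => g (t.2 i)) : ℝ) := by
  rw [messageLaw_pushf, messageLaw_pushf, klDiv_pushf (hac.blockLaw κ) (hQ.blockLaw hκ).1]

theorem coe_condMI_le_supCondMI (hR : 0 ≤ R) [NeZero n] (hP : IsPMF P)
    {κ : (Fin n → X) → Fin (2 ^ ⌊n * R⌋₊) → ℝ} (hκ : ∀ x, IsPMF (κ x)) {m : ℕ}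
    (e : Fin (2 ^ ⌊n * R⌋₊) × Fin n × (Fin n → Option (Y ⊕ Z)) → Fin m) :
    (condMI (timeShare (Fin n) (blockLaw P κ)) (fun t => (t.2.2 t.1).2.1)
      (fun t => e (auxVar (fun w => w.2.1) (fun w => w.2.2) t)) (fun t => (t.2.2 t.1).2.2) : ℝ)
      ≤ supCondMI P R := by
  have hrate : (n : ℝ)⁻¹ * Real.log (Fintype.card (Fin (2 ^ ⌊n * R⌋₊))) ≤ R := by
    simpa using inv_mul_log_two_pow_floor_le hR n
  refine le_sSup ⟨m, testChannel P κ fun t => e (auxVar (fun w => w.2.1) (fun w => w.2.2) t),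
    isPMF_testChannel hP hκ _, ?_, ?_, ?_⟩ <;>
  rw [← pushf_timeShare_blockLaw hP.2 κ (comp_auxVar_update e _ _), condMI_pushf]
  · exact (condMI_auxVar_left_le hP hκ _ _ Prod.fst e).trans hrate
  · exact (condMI_auxVar_right_le hP hκ _ _ Prod.fst e).trans hrate

theorem IsMarkovChain.klDiv_eq_top (h : IsMarkovChain Q (fun w => w.1) (fun w => w.2.2)
    fun w => w.2.1) (hP : ∀ w, 0 ≤ P w)
    (hXZ : AbsCont (pushf P fun w => (w.1, w.2.2)) (pushf Q fun w => (w.1, w.2.2)))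
    (hac : ¬AbsCont P Q) : klDiv (pushf P fun w => w.2) (pushf Q fun w => w.2) = ⊤ := by
  contrapose! hac
  rw [← pushf_id P, ← pushf_id Q]
  exact h.absCont hP hXZ (klDiv_lt_top_iff.mp hac.lt_top)

theorem inv_mul_klDiv_messageLaw_add_le (hR : 0 ≤ R) [NeZero n] (hP : IsPMF P) (hQ : IsPMF Q)
    (h : IsMarkovChain Q (fun w => w.1) (fun w => w.2.2) fun w => w.2.1)
    (hXZ : AbsCont (pushf P fun w => (w.1, w.2.2)) (pushf Q fun w => (w.1, w.2.2)))
    {κ : (Fin n → X) → Fin (2 ^ ⌊n * R⌋₊) → ℝ} (hκ : ∀ x, IsPMF (κ x)) :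
    ((n : ℝ)⁻¹ : ℝ) * klDiv (messageLaw (pushf P fun w => (w.1, w.2.1)) κ)
          (messageLaw (pushf Q fun w => (w.1, w.2.1)) κ)
        + klDiv (pushf P fun w => w.2.2) (pushf Q fun w => w.2.2)
      ≤ supCondMI P R + klDiv (pushf P fun w => w.2) (pushf Q fun w => w.2)
        + ((n : ℝ)⁻¹ : ℝ) * klDiv (messageLaw (pushf P fun w => (w.1, w.2.2)) κ)
          (messageLaw (pushf Q fun w => (w.1, w.2.2)) κ) := by
  let e := Fintype.equivFin (Fin (2 ^ ⌊n * R⌋₊) × Fin n × (Fin n → Option (Y ⊕ Z)))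
  refine le_trans ?_ (add_le_add_left (add_le_add_left (coe_condMI_le_supCondMI hR hP hκ e) _) _)
  by_cases hac : AbsCont P Q
  · rw [klDiv_messageLaw_pushf hQ hac hκ, klDiv_messageLaw_pushf hQ hac hκ, klDiv_pushf hac hQ.1,
      klDiv_pushf hac hQ.1]
    exact_mod_cast rvKLDiv_auxVar_add_le hP hQ hac hκ h e.injective
  · have hmessage := hXZ.messageLaw (hQ.pushf _).1 fun x => (hκ x).1
    rw [h.klDiv_eq_top hP.1 hXZ hac, klDiv_of_absCont hmessage,
      ← EReal.coe_mul, EReal.coe_add_top, EReal.top_add_coe]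
    exact le_top

theorem errExp_le_sup_condMI_add_klDiv_general (hR : 0 ≤ R) (hP : IsPMF P) (hQ : IsPMF Q)
    (hMarkov : IsMarkovChain Q (fun w => w.1) (fun w => w.2.2) fun w => w.2.1)
    (hXZ : AbsCont (pushf P fun w => (w.1, w.2.2)) (pushf Q fun w => (w.1, w.2.2))) :
    errExp (pushf P fun w => (w.1, w.2.1)) (pushf Q fun w => (w.1, w.2.1)) R
        + klDiv (pushf P fun w => w.2.2) (pushf Q fun w => w.2.2)
      ≤ supCondMI P R + klDiv (pushf P fun w => w.2) (pushf Q fun w => w.2)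
        + errExp (pushf P fun w => (w.1, w.2.2)) (pushf Q fun w => (w.1, w.2.2)) R := by
  have hZ : klDiv (pushf P fun w => w.2.2) (pushf Q fun w => w.2.2)
      = (rvKLDiv (pushf P fun w => (w.1, w.2.2)) (pushf Q fun w => (w.1, w.2.2)) Prod.snd : ℝ) := by
    rw [← klDiv_pushf hXZ (hQ.pushf _).1, pushf_pushf, pushf_pushf]
  rw [hZ, ← EReal.le_sub_iff_add_le (.inl (EReal.coe_ne_bot _)) (.inl (EReal.coe_ne_top _))]
  refine errExp_le fun n hn κ hκ => ?_
  have : NeZero n := ⟨hn.ne'⟩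
  rw [EReal.le_sub_iff_add_le (.inl (EReal.coe_ne_bot _)) (.inl (EReal.coe_ne_top _)), ← hZ]
  exact (inv_mul_klDiv_messageLaw_add_le hR hP hQ hMarkov hXZ hκ).trans
    (add_le_add_right (le_errExp _ _ hn hκ) _)

end ErrorExponent

/-- If `X → Z → Y` is Markov under `Q` and `P_XZ = Q_XZ`, with
`D(P_XY‖Q_XY) < ∞`, then `E_{P_XY,Q_XY}(R)` is at most the supremum of `I_P(Y;U|Z)` over all
finite `𝒰` and channels `P_{U|X}` with `I_P(U;X|Y) ≤ R` and `I_P(U;X|Z) ≤ R`, plus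
`D(P_YZ‖Q_YZ)`. -/
theorem errExp_le_sup_condMI_add_klDiv {X Y Z : Type*} [Fintype X] [Fintype Y] [Fintype Z]
    (R : ℝ) (hR : 0 < R)
    (P Q : X × Y × Z → ℝ) (hP : IsPMF P) (hQ : IsPMF Q)
    (hMarkov : ∀ x y z, Q (x, y, z) * pushf Q (fun w => w.2.2) z
      = pushf Q (fun w => (w.1, w.2.2)) (x, z) * pushf Q (fun w => (w.2.1, w.2.2)) (y, z))
    (hPQXZ : pushf P (fun w => (w.1, w.2.2)) = pushf Q (fun w => (w.1, w.2.2)))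
    (hXY : klDiv (pushf P (fun w => (w.1, w.2.1))) (pushf Q (fun w => (w.1, w.2.1))) < ⊤) :
    errExp (pushf P (fun w => (w.1, w.2.1))) (pushf Q (fun w => (w.1, w.2.1))) R
      ≤ sSup {v : EReal | ∃ (m : ℕ) (ch : X → Fin m → ℝ),
            (∀ x, IsPMF (ch x)) ∧
            condMI (fun w : Fin m × X × Y × Z => ch w.2.1 w.1 * P w.2)
              (fun w => w.1) (fun w => w.2.1) (fun w => w.2.2.1) ≤ R ∧
            condMI (fun w : Fin m × X × Y × Z => ch w.2.1 w.1 * P w.2)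
              (fun w => w.1) (fun w => w.2.1) (fun w => w.2.2.2) ≤ R ∧
            v = ((condMI (fun w : Fin m × X × Y × Z => ch w.2.1 w.1 * P w.2)
              (fun w => w.2.2.1) (fun w => w.1) (fun w => w.2.2.2) : ℝ) : EReal)}
        + klDiv (pushf P (fun w => w.2)) (pushf Q (fun w => w.2)) := by
  have hZ : pushf P (fun w => w.2.2) = pushf Q (fun w => w.2.2) := by
    simpa only [pushf_pushf] using congrArg (fun p => pushf p Prod.snd) hPQXZ
  have h := errExp_le_sup_condMI_add_klDiv_general hR.le hP hQ
    (fun x y z => by simpa only [pushf_id] using hMarkov x y z) (hPQXZ ▸ fun _ => id)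
  rw [hPQXZ, hZ, klDiv_self, add_zero] at h
  exact h.trans (add_le_of_nonpos_right (errExp_self_nonpos _ R))

end
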